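/- Let (E^{p,q}, d_v, d_h) be a double complex of finite-dimensional vector spaces with finitely many nonzero terms, where d_v : E^{p,q} → E^{p,q+1}, d_h : E^{p,q} → E^{p−1,q}, d_v² = 0, d_h² = 0, and d_h d_v + d_v d_h = 0. Suppose each E^{p,q} decomposes as ⊕_{λ ∈ P} E^{p,q,λ} for a poset P, with d_v(E^{p,q,λ}) ⊆ E^{p,q+1,λ} and d_h(E^{p,q,λ}) ⊆ ⊕_{λ' < λ} E^{p−1,q,λ'}. If the total complex Tot(E) (with differential d_h + d_v, graded by p − q) is exact, then the E₁ graph of E has a perfect matching; here the E₁ graph has dim H(d_v)^{p,q,λ} vertices labeled (p,q,λ) and all edges (p,q,λ) → (p−r, q−r+1, λ') for r > 0 and λ' < λ. -/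

import Mathlib

open DirectSum

section

variable (K : Type) [Field K] (P : Type) [PartialOrder P] [DecidableEq P]
variable (F : ℤ → ℤ → P → Type)
variable [∀ p q l, AddCommGroup (F p q l)] [∀ p q l, Module K (F p q l)]

/-- The term `E^{p,q} = ⊕_{λ ∈ P} E^{p,q,λ}` of the double complex. -/
noncomputable abbrev EE (p q : ℤ) : Type := ⨁ l : P, F p q l

variable (dv : ∀ (p q : ℤ) (l : P), F p q l →ₗ[K] F p (q + 1) l)

/-- The vertical differential `E^{p,q} → E^{p,q+1}` induced by the label-preserving
componentwise maps `dv`. -/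
noncomputable def DV (p q : ℤ) : EE P F p q →ₗ[K] EE P F p (q + 1) :=
  DirectSum.toModule K P _ fun l =>
    (DirectSum.lof K P (fun l' => F p (q + 1) l') l).comp (dv p q l)

/-- Transport along an equality of the `q`-index. -/
noncomputable def qcast (p : ℤ) {q q' : ℤ} (h : q = q') :
    EE P F p q →ₗ[K] EE P F p q' := by subst h; exact LinearMap.id

/-- The `i`-th term `Tot^i = ⊕_{p−q=i} E^{p,q}` of the total complex. -/
noncomputable abbrev Tot (i : ℤ) : Type := ⨁ p : ℤ, EE P F p (p - i)

variable (dh : ∀ p q : ℤ, EE P F p q →ₗ[K] EE P F (p - 1) q)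

/-- The total differential `d_h + d_v : Tot^{i+1} → Tot^i`. -/
noncomputable def totD (i : ℤ) : Tot P F (i + 1) →ₗ[K] Tot P F i :=
  DirectSum.toModule K ℤ (Tot P F i) fun p =>
    (DirectSum.lof K ℤ (fun p' => EE P F p' (p' - i)) (p - 1)).comp
        ((qcast K P F (p - 1) (show p - (i + 1) = p - 1 - i by ring)).comp
          (dh p (p - (i + 1)))) +
      (DirectSum.lof K ℤ (fun p' => EE P F p' (p' - i)) p).comp
        ((qcast K P F p (show p - (i + 1) + 1 = p - i by ring)).comp
          (DV K P F dv p (p - (i + 1))))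

/-- The dimension of the vertical homology `H(d_v)^{p,q,λ} = ker/im`; since
`im ⊆ ker`, it equals `dim ker (d_v^{p,q,λ}) − dim im (d_v^{p,q−1,λ})`. -/
noncomputable def Hdim (p q : ℤ) (l : P) : ℕ :=
  Module.finrank K (LinearMap.ker (dv p q l)) -
    Module.finrank K (LinearMap.range (dv p (q - 1) l))

end

/-!
Let `D = d_v + d_h` on the sum of all the `E^{p,q,λ}`, and split each piece into a complement `U` of
`ker d_v`, the `d_v`-boundaries `d_v U`, and a harmonic part `H`. Replacing each boundary `d_v b` by
`D b` changes it by `d_h b`, which lies strictly lower in a well-founded order, so the vectors of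
`U`, `D U` and `H` still span and, by counting dimensions, still form a basis. As `U + D U` is a
contractible subcomplex, `D` descends to an exact differential on the quotient, whose matrix in the
basis `H` has nonzero entries only along edges of the `E₁` graph.

For an exact differential on a space with a basis, choose basis vectors whose images form a basis of
the image. The block of the matrix from the chosen vectors to the remaining ones is square and
invertible, and a nonzero term in the expansion of its determinant is a perfect matching.
-/

section PerfectMatching

variable {N : Type*}

/-- The involution `m` is a perfect matching of the directed graph with edge relation `E`: every
vertex is joined to a different vertex, its partner `m v`, by an edge in one of the two
directions. -/
def IsPerfectMatching (E : N → N → Prop) (m : N → N) : Prop :=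
  Function.Involutive m ∧ ∀ v, m v ≠ v ∧ (E v (m v) ∨ E (m v) v)

theorem IsPerfectMatching.mono {E E' : N → N → Prop} {m : N → N} (hm : IsPerfectMatching E m)
    (h : ∀ v w, E v w → E' v w) : IsPerfectMatching E' m :=
  ⟨hm.1, fun v => ⟨(hm.2 v).1, (hm.2 v).2.imp (h _ _) (h _ _)⟩⟩

theorem exists_isPerfectMatching_of_equiv_compl {E : N → N → Prop} {S : Set N} (σ : S ≃ ↥Sᶜ)
    (hσ : ∀ s : S, E s (σ s)) : ∃ m, IsPerfectMatching E m := by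
  classical
  let e := Equiv.Set.sumCompl S
  let swap : Equiv.Perm (S ⊕ ↥Sᶜ) := (Equiv.sumComm _ _).trans (σ.symm.sumCongr σ)
  refine ⟨e.permCongr swap, e.forall_congr_right.mp ?_, e.forall_congr_right.mp ?_⟩
  · rintro (s | t) <;> simp [swap]
  · rintro (s | t)
    · refine ⟨by simpa [swap, e] using (ne_of_mem_of_not_mem s.2 (σ s).2).symm, .inl ?_⟩
      simpa [swap, e] using hσ s
    · refine ⟨by simpa [swap, e] using ne_of_mem_of_not_mem (σ.symm t).2 t.2, .inr ?_⟩
      simpa [swap, e] using hσ (σ.symm t)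

end PerfectMatching

section ExactMatching

variable {K : Type*} [Field K]

theorem exists_equiv_apply_ne_zero_of_linearIndependent {S T : Type*} [Finite T] {w : S → T → K}
    (hw : LinearIndependent K w) (hcard : Nat.card S = Nat.card T) :
    ∃ σ : S ≃ T, ∀ s, w s (σ s) ≠ 0 := by
  classical
  have := Fintype.ofFinite T
  have : Finite S := hw.finite
  obtain ⟨e⟩ : Nonempty (T ≃ S) := Finite.card_eq.mp hcard.symm
  let A : Matrix T T K := fun t t' => w (e t) t'
  have hdet : A.det ≠ 0 := ((Matrix.isUnit_iff_isUnit_det A).mp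
    (Matrix.linearIndependent_rows_iff_isUnit.mp (hw.comp e e.injective))).ne_zero
  rw [← A.det_transpose, Matrix.det_apply] at hdet
  obtain ⟨σ, -, hσ⟩ := Finset.exists_ne_zero_of_sum_ne_zero hdet
  have hprod : ∏ t, A t (σ t) ≠ 0 := right_ne_zero_of_smul hσ
  refine ⟨e.symm.trans σ, fun s => ?_⟩
  simpa [A] using Finset.prod_ne_zero_iff.mp hprod (e.symm s) (Finset.mem_univ _)

theorem exists_basis_subset_range {N Q W : Type*} [AddCommGroup Q] [Module K Q]
    [AddCommGroup W] [Module K W] (b : Module.Basis N K Q) (D : Q →ₗ[K] W) :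
    ∃ S : Set N, LinearIndepOn K (D ∘ b) S ∧ Submodule.span K (D ∘ b '' S) = LinearMap.range D := by
  obtain ⟨S, -, -, hspan, hS⟩ :=
    exists_linearIndepOn_extension (linearIndepOn_empty K (D ∘ b)) (Set.subset_univ ∅)
  refine ⟨S, hS, le_antisymm ?_ ?_⟩
  · rw [Submodule.span_le]
    rintro _ ⟨s, -, rfl⟩
    exact ⟨b s, rfl⟩
  · rw [LinearMap.range_eq_map, ← b.span_eq, Submodule.map_span, ← Set.range_comp,
      ← Set.image_univ, Submodule.span_le]
    exact hspan

theorem exists_isPerfectMatching_of_exact {N Q : Type*} [Finite N] [AddCommGroup Q] [Module K Q]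
    (b : Module.Basis N K Q) {D : Q →ₗ[K] Q} (hD : LinearMap.range D = LinearMap.ker D) :
    ∃ m, IsPerfectMatching (fun n n' => b.repr (D (b n)) n' ≠ 0) m := by
  obtain ⟨S, hS, hspan⟩ := exists_basis_subset_range b D
  have hfin : FiniteDimensional K Q := b.finiteDimensional_of_finite
  have hrange : Submodule.span K (Set.range fun s : S => D (b s)) = LinearMap.range D := by
    rw [← hspan, Set.image_eq_range]; rfl
  have hcard : Nat.card S = Nat.card ↥Sᶜ := by
    have := Fintype.ofFinite S
    have hSrank : Module.finrank K (LinearMap.range D) = Nat.card S := by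
      rw [← hrange, Nat.card_eq_fintype_card]
      exact finrank_span_eq_card hS
    have hrank := LinearMap.finrank_range_add_finrank_ker D
    rw [← hD, Module.finrank_eq_nat_card_basis b] at hrank
    have hcompl : Nat.card S + Nat.card ↥Sᶜ = Nat.card N := Set.ncard_add_ncard_compl S
    lia
  let ρ : Q →ₗ[K] (↥Sᶜ → K) := LinearMap.pi fun t => b.coord t
  have hker : LinearMap.ker ρ ≤ Submodule.span K (Set.range fun s : S => b s) := by
    intro x hx
    rw [← Set.image_eq_range, b.mem_span_image]
    intro n hn
    by_contra hnS
    exact Finsupp.mem_support_iff.mp hn (congrFun hx ⟨n, hnS⟩)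
  have hdisj : Disjoint (Submodule.span K (Set.range fun s : S => D (b s))) (LinearMap.ker ρ) := by
    rw [hrange, hD]
    exact (Submodule.range_ker_disjoint hS).symm.mono_right hker
  obtain ⟨σ, hσ⟩ := exists_equiv_apply_ne_zero_of_linearIndependent
    (LinearIndependent.map hS hdisj) hcard
  exact exists_isPerfectMatching_of_equiv_compl σ hσ
end ExactMatching

section Contraction

theorem range_mapQ_eq_ker_mapQ {R V : Type*} [Ring R] [AddCommGroup V] [Module R V]
    {D : V →ₗ[R] V} (hD : LinearMap.range D = LinearMap.ker D) {U : Submodule R V}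
    (hU : Disjoint U (LinearMap.ker D)) (hstable : U ⊔ U.map D ≤ (U ⊔ U.map D).comap D) :
    LinearMap.range ((U ⊔ U.map D).mapQ _ D hstable) =
      LinearMap.ker ((U ⊔ U.map D).mapQ _ D hstable) := by
  have hDD (v : V) : D (D v) = 0 := hD.le ⟨v, rfl⟩
  apply le_antisymm
  · rintro _ ⟨q, rfl⟩
    obtain ⟨v, rfl⟩ := Submodule.mkQ_surjective _ q
    simp [hDD]
  · intro q hq
    obtain ⟨v, rfl⟩ := Submodule.mkQ_surjective _ q
    obtain ⟨a, ha, _, ⟨c, hc, rfl⟩, hv⟩ := Submodule.mem_sup.mp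
      ((Submodule.Quotient.mk_eq_zero _).mp (by simpa using hq : Submodule.Quotient.mk (D v) = _))
    have ha0 : a = 0 := Submodule.disjoint_def.mp hU a ha (by simpa [hDD] using congrArg D hv)
    obtain ⟨w, hw⟩ : v - c ∈ LinearMap.range D := by
      rw [hD, LinearMap.mem_ker, map_sub, ← hv, ha0, zero_add, sub_self]
    refine ⟨Submodule.mkQ _ w, ?_⟩
    rw [Submodule.mkQ_apply, Submodule.mapQ_apply, hw, Submodule.mkQ_apply,
      Submodule.Quotient.eq]
    simpa using Submodule.mem_sup_left hc

theorem sup_map_le_comap {R V : Type*} [Ring R] [AddCommGroup V] [Module R V]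
    {D : V →ₗ[R] V} (hDD : D ∘ₗ D = 0) (U : Submodule R V) :
    U ⊔ U.map D ≤ (U ⊔ U.map D).comap D := by
  rw [sup_le_iff, ← Submodule.map_le_iff_le_comap, ← Submodule.map_le_iff_le_comap,
    ← Submodule.map_comp, hDD, Submodule.map_zero]
  exact ⟨le_sup_right, bot_le⟩

theorem exists_isPerfectMatching_of_contraction {K V J N : Type*} [Field K] [AddCommGroup V]
    [Module K V] [Finite N] {D : V →ₗ[K] V} (hD : LinearMap.range D = LinearMap.ker D)
    {u : J → V} {h : N → V}
    (hli : LinearIndependent K (Sum.elim (Sum.elim u (D ∘ u)) h))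
    (hspan : ⊤ ≤ Submodule.span K (Set.range (Sum.elim (Sum.elim u (D ∘ u)) h)))
    {E : N → N → Prop}
    (hE : ∀ n, D (h n) ∈ Submodule.span K (Set.range (Sum.elim u (D ∘ u))) ⊔
      Submodule.span K (h '' {n' | E n n'})) :
    ∃ m, IsPerfectMatching E m := by
  let U := Submodule.span K (Set.range u)
  let C := U ⊔ U.map D
  have hC : Submodule.span K (Set.range (Sum.elim u (D ∘ u))) = C := by
    rw [Set.Sum.elim_range, Submodule.span_union, Set.range_comp, ← Submodule.map_span]
  obtain ⟨hliC, hlih, hdisj⟩ := linearIndependent_sum.mp hli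
  simp only [Sum.elim_comp_inl, Sum.elim_comp_inr] at hliC hlih hdisj
  rw [hC] at hdisj
  have hstable := sup_map_le_comap (LinearMap.range_le_ker_iff.mp hD.le) U
  have hexact := range_mapQ_eq_ker_mapQ hD
    (Submodule.range_ker_disjoint (linearIndependent_sum.mp hliC).2.1) hstable
  have hspanC : ⊤ ≤ Submodule.span K (Set.range (C.mkQ ∘ h)) := by
    rw [Set.Sum.elim_range, Submodule.span_union, hC] at hspan
    have := Submodule.map_mono (f := C.mkQ) hspan
    rwa [Submodule.map_sup, Submodule.map_span, ← Set.range_comp, Submodule.map_top,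
      Submodule.range_mkQ, Submodule.mkQ_map_self, bot_sup_eq] at this
  let b := Module.Basis.mk (hlih.map (f := C.mkQ) (by simpa using hdisj.symm)) hspanC
  have hb : b = C.mkQ ∘ h := Module.Basis.coe_mk _ _
  obtain ⟨m, hm⟩ := exists_isPerfectMatching_of_exact b hexact
  refine ⟨m, hm.mono fun n n' hnn' => ?_⟩
  have hmem : C.mapQ C D hstable (b n) ∈ Submodule.span K (b '' {n' | E n n'}) := by
    have := Submodule.mem_map_of_mem (f := C.mkQ) (hE n)
    rw [hC, Submodule.map_sup, Submodule.mkQ_map_self, bot_sup_eq, Submodule.map_span,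
      ← Set.image_comp, ← hb] at this
    simpa [hb] using this
  exact b.mem_span_image.mp hmem (Finsupp.mem_support_iff.mpr hnn')

end Contraction

section Perturbation

variable {K V X : Type*} [Field K] [AddCommGroup V] [Module K V]

/-- The sum of the subspaces `𝒱 y` over all `y` below `x` for the relation `r`; it bounds the error
made on passing from a graded map to a perturbation of it. -/
def strictBelow (r : X → X → Prop) (𝒱 : X → Submodule K V) (x : X) : Submodule K V :=
  ⨆ y, ⨆ _ : r y x, 𝒱 y

theorem strictBelow_le {r : X → X → Prop} {𝒱 : X → Submodule K V} {x : X} {W : Submodule K V} :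
    strictBelow r 𝒱 x ≤ W ↔ ∀ y, r y x → 𝒱 y ≤ W := iSup₂_le_iff

theorem le_strictBelow {r : X → X → Prop} (𝒱 : X → Submodule K V) {x y : X} (h : r y x) :
    𝒱 y ≤ strictBelow r 𝒱 x := le_iSup₂_of_le y h le_rfl

theorem exists_sup_span_range_eq {W' W : Submodule K V} [FiniteDimensional K W] (hle : W' ≤ W)
    {n : ℕ} (hn : n + Module.finrank K W' = Module.finrank K W) :
    ∃ v : Fin n → V, W' ⊔ Submodule.span K (Set.range v) = W := by
  obtain ⟨C, hdisj, rfl⟩ := IsModularLattice.exists_disjoint_and_sup_eq hle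
  have : FiniteDimensional K W' := Submodule.finiteDimensional_of_le hle
  have : FiniteDimensional K C := Submodule.finiteDimensional_of_le (le_sup_right (a := W'))
  have hC : Module.finrank K C = n := by
    have := Submodule.finrank_sup_add_finrank_inf_eq W' C
    rw [hdisj.eq_bot, finrank_bot] at this
    lia
  let b := Module.finBasisOfFinrankEq K C hC
  refine ⟨C.subtype ∘ b, ?_⟩
  rw [Set.range_comp, ← Submodule.map_span, b.span_eq, Submodule.map_top, C.range_subtype]

/-- If the dimensions `f` of a graded space are those `k` of the complements of the cycles, plus
those of the boundaries (which are `k` shifted by `s`), plus those `η` of the homology, then a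
homogeneous basis can be indexed by complements, boundaries and homology. The boundaries are indexed
by the degree of their preimages. -/
def sigmaFinEquivSum {s : Equiv.Perm X} {f k η : X → ℕ}
    (h : ∀ x, f x = k x + k (s.symm x) + η x) :
    (Σ x, Fin (f x)) ≃ ((Σ x, Fin (k x)) ⊕ Σ x, Fin (k x)) ⊕ Σ x, Fin (η x) :=
  calc (Σ x, Fin (f x))
    _ ≃ Σ x, (Fin (k x) ⊕ Fin (k (s.symm x))) ⊕ Fin (η x) :=
      Equiv.sigmaCongrRight fun x => (finCongr (h x)).trans
        (finSumFinEquiv.symm.trans (finSumFinEquiv.symm.sumCongr (Equiv.refl _)))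
    _ ≃ (Σ x, Fin (k x) ⊕ Fin (k (s.symm x))) ⊕ Σ x, Fin (η x) := Equiv.sigmaSumDistrib _ _
    _ ≃ ((Σ x, Fin (k x)) ⊕ Σ x, Fin (k (s.symm x))) ⊕ Σ x, Fin (η x) :=
      (Equiv.sigmaSumDistrib _ _).sumCongr (Equiv.refl _)
    _ ≃ ((Σ x, Fin (k x)) ⊕ Σ x, Fin (k x)) ⊕ Σ x, Fin (η x) :=
      ((Equiv.refl _).sumCongr (Equiv.sigmaCongrLeft (β := fun x => Fin (k x)) s.symm)).sumCongr
        (Equiv.refl _)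

variable {𝒱 : X → Submodule K V} {s : Equiv.Perm X} {d δ : V →ₗ[K] V} {η : X → ℕ}

theorem map_symm_le_ker_inf (hd : ∀ x, (𝒱 x).map d ≤ 𝒱 (s x)) (hdd : d ∘ₗ d = 0) (x : X) :
    (𝒱 (s.symm x)).map d ≤ LinearMap.ker d ⊓ 𝒱 x := by
  refine le_inf ?_ (by simpa using hd (s.symm x))
  exact LinearMap.map_le_range.trans (LinearMap.range_le_ker_iff.mpr hdd)

theorem finrank_eq_finrank_map_add [FiniteDimensional K V] (d : V →ₗ[K] V) (W : Submodule K V) :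
    Module.finrank K W =
      Module.finrank K (W.map d) + Module.finrank K (LinearMap.ker d ⊓ W : Submodule K V) := by
  have := (d.domRestrict W).finrank_range_add_finrank_ker
  rw [LinearMap.range_domRestrict, LinearMap.ker_domRestrict, ← Submodule.finrank_map_subtype_eq,
    Submodule.map_comap_subtype] at this
  rw [← this, inf_comm]

theorem exists_graded_splitting [FiniteDimensional K V] (hd : ∀ x, (𝒱 x).map d ≤ 𝒱 (s x))
    (hdd : d ∘ₗ d = 0)
    (hη : ∀ x, η x + Module.finrank K ((𝒱 (s.symm x)).map d) =
      Module.finrank K (LinearMap.ker d ⊓ 𝒱 x : Submodule K V)) :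
    ∃ (u : ∀ x, Fin (Module.finrank K ((𝒱 x).map d)) → V) (h : ∀ x, Fin (η x) → V),
      (∀ x, Submodule.span K (Set.range (u x)) ≤ 𝒱 x) ∧
      (∀ x, Submodule.span K (Set.range (h x)) ≤ LinearMap.ker d ⊓ 𝒱 x) ∧
      ∀ x, 𝒱 x ≤ Submodule.span K (Set.range (u x)) ⊔
        ((Submodule.span K (Set.range (u (s.symm x)))).map d ⊔
          Submodule.span K (Set.range (h x))) := by
  choose u hu using fun x => exists_sup_span_range_eq
    (inf_le_right : LinearMap.ker d ⊓ 𝒱 x ≤ 𝒱 x) (finrank_eq_finrank_map_add d (𝒱 x)).symm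
  choose h hh using fun x => exists_sup_span_range_eq (map_symm_le_ker_inf hd hdd x) (hη x)
  refine ⟨u, h, fun x => le_sup_right.trans (hu x).le, fun x => le_sup_right.trans (hh x).le,
    fun x => ?_⟩
  have hmap (y : X) : (𝒱 y).map d = (Submodule.span K (Set.range (u y))).map d := by
    have hker : (LinearMap.ker d ⊓ 𝒱 y).map d = ⊥ :=
      LinearMap.le_ker_iff_map.mp inf_le_left
    conv_lhs => rw [← hu y, Submodule.map_sup, hker, bot_sup_eq]
  conv_lhs => rw [← hu x, ← hh x, hmap, sup_comm]

theorem strictBelow_le_sup_strictBelow {r : X → X → Prop} [IsTrans X r] {H : X → Submodule K V}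
    {C : Submodule K V} {x : X} (h : ∀ y, r y x → 𝒱 y ≤ C ⊔ (H y ⊔ strictBelow r H y)) :
    strictBelow r 𝒱 x ≤ C ⊔ strictBelow r H x :=
  strictBelow_le.mpr fun y hyx => (h y hyx).trans <| sup_le_sup_left
    (sup_le (le_strictBelow H hyx)
      (strictBelow_le.mpr fun _ hzy => le_strictBelow H (_root_.trans hzy hyx))) C

theorem le_sup_of_perturbation {r : X → X → Prop} [IsTrans X r]
    (hr : {x | 𝒱 x ≠ ⊥}.WellFoundedOn r) (hδ : ∀ x, (𝒱 x).map δ ≤ strictBelow r 𝒱 (s x))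
    {U H : X → Submodule K V} {C : Submodule K V} (hU : ∀ x, U x ≤ 𝒱 x)
    (hsplit : ∀ x, 𝒱 x ≤ U x ⊔ ((U (s.symm x)).map d ⊔ H x))
    (hUC : ∀ x, U x ≤ C) (hDC : ∀ x, (U x).map (d + δ) ≤ C) (x : X) :
    𝒱 x ≤ C ⊔ (H x ⊔ strictBelow r H x) := by
  by_cases hx : 𝒱 x = ⊥
  · simp [hx]
  refine hr.induction (P := fun x => 𝒱 x ≤ C ⊔ (H x ⊔ strictBelow r H x)) hx fun x _ ih => ?_
  have hlow : strictBelow r 𝒱 x ≤ C ⊔ strictBelow r H x := by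
    refine strictBelow_le_sup_strictBelow fun y hyx => ?_
    by_cases hy : 𝒱 y = ⊥
    · simp [hy]
    · exact ih y hy hyx
  have hdU : (U (s.symm x)).map d ≤ C ⊔ strictBelow r H x := by
    rintro _ ⟨w, hw, rfl⟩
    have hδw : δ w ∈ strictBelow r 𝒱 x := by
      simpa using hδ (s.symm x) (Submodule.mem_map_of_mem (hU _ hw))
    rw [← add_sub_cancel_right (d w) (δ w)]
    exact sub_mem (Submodule.mem_sup_left (hDC _ (Submodule.mem_map_of_mem hw))) (hlow hδw)
  refine (hsplit x).trans (sup_le (le_sup_of_le_left (hUC x)) (sup_le (hdU.trans ?_) ?_))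
  · exact sup_le_sup_left le_sup_right C
  · exact le_sup_of_le_right le_sup_left

theorem exists_top_le_span_of_perturbation [FiniteDimensional K V] [DecidableEq X]
    (h𝒱 : DirectSum.IsInternal 𝒱) {r : X → X → Prop} [IsStrictOrder X r]
    (hd : ∀ x, (𝒱 x).map d ≤ 𝒱 (s x)) (hdd : d ∘ₗ d = 0)
    (hδ : ∀ x, (𝒱 x).map δ ≤ strictBelow r 𝒱 (s x))
    (hη : ∀ x, η x + Module.finrank K ((𝒱 (s.symm x)).map d) =
      Module.finrank K (LinearMap.ker d ⊓ 𝒱 x : Submodule K V)) :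
    ∃ (u : (Σ x, Fin (Module.finrank K ((𝒱 x).map d))) → V) (h : (Σ x, Fin (η x)) → V),
      ⊤ ≤ Submodule.span K (Set.range (Sum.elim (Sum.elim u ((d + δ) ∘ u)) h)) ∧
      ∀ n, (d + δ) (h n) ∈ Submodule.span K (Set.range (Sum.elim u ((d + δ) ∘ u))) ⊔
        Submodule.span K (h '' {n' | r n'.1 (s n.1)}) := by
  obtain ⟨u, h, hu, hh, hsplit⟩ := exists_graded_splitting hd hdd hη
  let u' : (Σ x, Fin (Module.finrank K ((𝒱 x).map d))) → V := fun j => u j.1 j.2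
  let h' : (Σ x, Fin (η x)) → V := fun n => h n.1 n.2
  let C := Submodule.span K (Set.range (Sum.elim u' ((d + δ) ∘ u')))
  have hUC (x : X) : Submodule.span K (Set.range (u x)) ≤ C :=
    Submodule.span_mono (Set.range_subset_iff.mpr fun i => ⟨.inl ⟨x, i⟩, rfl⟩)
  have hDC (x : X) : (Submodule.span K (Set.range (u x))).map (d + δ) ≤ C := by
    rw [Submodule.map_span, ← Set.range_comp]
    exact Submodule.span_mono (Set.range_subset_iff.mpr fun i => ⟨.inr ⟨x, i⟩, rfl⟩)
  have hfin : {x | 𝒱 x ≠ ⊥}.Finite :=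
    WellFoundedGT.finite_ne_bot_of_iSupIndep h𝒱.submodule_iSupIndep
  have hle := le_sup_of_perturbation hfin.wellFoundedOn hδ hu hsplit hUC hDC
  refine ⟨u', h', ?_, fun n => ?_⟩
  · have hH (x : X) : Submodule.span K (Set.range (h x)) ≤ Submodule.span K (Set.range h') :=
      Submodule.span_mono (Set.range_subset_iff.mpr fun i => ⟨⟨x, i⟩, rfl⟩)
    rw [Set.Sum.elim_range, Submodule.span_union, ← h𝒱.submodule_iSup_eq_top, iSup_le_iff]
    exact fun x => (hle x).trans
      (sup_le_sup_left (sup_le (hH x) (strictBelow_le.mpr fun y _ => hH y)) C)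
  · obtain ⟨hker, hn⟩ := hh n.1 (Submodule.subset_span ⟨n.2, rfl⟩)
    have hDh : (d + δ) (h' n) ∈ strictBelow r 𝒱 (s n.1) := by
      rw [LinearMap.add_apply, LinearMap.mem_ker.mp hker, zero_add]
      exact hδ n.1 (Submodule.mem_map_of_mem hn)
    have hlow := strictBelow_le_sup_strictBelow fun y (_ : r y (s n.1)) => hle y
    refine hlow.trans (sup_le_sup_left (strictBelow_le.mpr fun y hy => ?_) C) hDh
    exact Submodule.span_mono (Set.range_subset_iff.mpr fun i => ⟨⟨y, i⟩, hy, rfl⟩)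

theorem linearIndependent_of_top_le_span_of_isInternal [FiniteDimensional K V] [DecidableEq X]
    (h𝒱 : DirectSum.IsInternal 𝒱) {ι : Type*} (e : (Σ x, Fin (Module.finrank K (𝒱 x))) ≃ ι)
    {v : ι → V} (hv : ⊤ ≤ Submodule.span K (Set.range v)) : LinearIndependent K v := by
  let b := (h𝒱.collectedBasis fun x => Module.finBasis K (𝒱 x)).reindex e
  have := Module.Finite.finite_basis b
  have := Fintype.ofFinite ι
  exact linearIndependent_of_top_le_span_of_card_eq_finrank hv
    (Module.finrank_eq_card_basis b).symm

theorem exists_isPerfectMatching_of_perturbation [FiniteDimensional K V] [DecidableEq X]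
    (h𝒱 : DirectSum.IsInternal 𝒱) {r : X → X → Prop} [IsStrictOrder X r]
    (hd : ∀ x, (𝒱 x).map d ≤ 𝒱 (s x)) (hdd : d ∘ₗ d = 0)
    (hδ : ∀ x, (𝒱 x).map δ ≤ strictBelow r 𝒱 (s x))
    (hexact : LinearMap.range (d + δ) = LinearMap.ker (d + δ))
    (hη : ∀ x, η x + Module.finrank K ((𝒱 (s.symm x)).map d) =
      Module.finrank K (LinearMap.ker d ⊓ 𝒱 x : Submodule K V)) :
    ∃ m, IsPerfectMatching (fun v w : Σ x, Fin (η x) => r w.1 (s v.1)) m := by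
  obtain ⟨u, h, hspan, hDh⟩ := exists_top_le_span_of_perturbation h𝒱 hd hdd hδ hη
  have hli : LinearIndependent K (Sum.elim (Sum.elim u ((d + δ) ∘ u)) h) := by
    refine linearIndependent_of_top_le_span_of_isInternal h𝒱
      (sigmaFinEquivSum (s := s) fun x => ?_) hspan
    rw [finrank_eq_finrank_map_add d (𝒱 x), ← hη x]
    ring
  have : Finite (Σ x, Fin (η x)) := (linearIndependent_sum.mp hli).2.1.finite
  exact exists_isPerfectMatching_of_contraction hexact hli hspan hDh

end Perturbation

section DirectSumLemmas

variable {R ι V : Type*} {M : ι → Type*}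

section Ring

variable [Ring R] [DecidableEq ι] [∀ i, AddCommGroup (M i)] [∀ i, Module R (M i)]
  [AddCommGroup V] [Module R V]

theorem isInternal_range_lof : IsInternal fun i => LinearMap.range (lof R ι M i) := by
  rw [isInternal_submodule_iff_iSupIndep_and_iSup_eq_top, iSupIndep_def]
  refine ⟨fun i => ?_, DFinsupp.iSup_range_lsingle⟩
  have hker : ⨆ j, ⨆ _ : j ≠ i, LinearMap.range (lof R ι M j) ≤
      LinearMap.ker (component R ι M i) := by
    refine iSup₂_le fun j hji => LinearMap.range_le_ker_iff.mpr (LinearMap.ext fun a => ?_)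
    simp [component.of, hji]
  rw [Submodule.disjoint_def]
  rintro _ ⟨a, rfl⟩ ha
  have ha0 : a = 0 := by simpa using hker ha
  rw [ha0, map_zero]

theorem symm_apply_directSum (s : Equiv.Perm ι) {f : ∀ i, M (s i) →ₗ[R] M i}
    (e : (⨁ i, M i) ≃ₗ[R] V) {D : V →ₗ[R] V}
    (hD : ∀ i a, D (e (lof R ι M (s i) a)) = e (lof R ι M i (f i a))) (v : V) (i : ι) :
    e.symm (D v) i = f i (e.symm v (s i)) := by
  obtain ⟨x, rfl⟩ := e.surjective v
  rw [e.symm_apply_apply]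
  induction x using DirectSum.induction_on with
  | zero => simp
  | add x y hx hy => simp only [map_add, DirectSum.add_apply, hx, hy]
  | of j a =>
    obtain ⟨k, rfl⟩ := s.surjective j
    rw [← lof_eq_of R, hD, e.symm_apply_apply, lof_eq_of, lof_eq_of]
    by_cases hik : i = k
    · subst hik
      rw [of_eq_same, of_eq_same]
    · rw [of_eq_of_ne _ _ _ hik, of_eq_of_ne _ _ _ (s.injective.ne hik), map_zero]

theorem range_eq_ker_of_directSum (s : Equiv.Perm ι) {f : ∀ i, M (s i) →ₗ[R] M i}
    (hf : ∀ i, LinearMap.range (f (s i)) = LinearMap.ker (f i)) (e : (⨁ i, M i) ≃ₗ[R] V)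
    {D : V →ₗ[R] V} (hD : ∀ i a, D (e (lof R ι M (s i) a)) = e (lof R ι M i (f i a))) :
    LinearMap.range D = LinearMap.ker D := by
  have happly := symm_apply_directSum s e hD
  apply le_antisymm
  · rw [LinearMap.range_le_ker_iff]
    refine LinearMap.ext fun v => e.symm.injective (DFinsupp.ext fun i => ?_)
    have hff : f i (f (s i) (e.symm v (s (s i)))) = 0 := (hf i).le ⟨_, rfl⟩
    simpa [happly] using hff
  · classical
    intro v hv
    rw [← e.apply_symm_apply v, ← sum_support_of (e.symm v), map_sum]
    refine sum_mem fun i _ => ?_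
    obtain ⟨j, rfl⟩ := s.surjective i
    obtain ⟨a, ha⟩ : e.symm v (s j) ∈ LinearMap.range (f (s j)) := by
      rw [hf, LinearMap.mem_ker, ← happly, LinearMap.mem_ker.mp hv, map_zero,
        DirectSum.zero_apply]
    exact ⟨_, (hD (s j) a).trans (by rw [ha, lof_eq_of])⟩

end Ring

theorem finiteDimensional_directSum [Field R] [∀ i, AddCommGroup (M i)] [∀ i, Module R (M i)]
    [∀ i, FiniteDimensional R (M i)]
    (hM : (Function.support fun i => Module.finrank R (M i)).Finite) :
    FiniteDimensional R (⨁ i, M i) := by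
  classical
  have htop : ⊤ ≤ ⨆ i ∈ hM.toFinset, LinearMap.range (lof R ι M i) := by
    rw [← (isInternal_range_lof (R := R)).submodule_iSup_eq_top]
    refine iSup_le fun i => ?_
    by_cases hi : Module.finrank R (M i) = 0
    · have := Module.finrank_zero_iff.mp hi
      rw [LinearMap.range_eq_bot.mpr (Subsingleton.elim _ 0)]
      exact bot_le
    · exact le_iSup₂_of_le i (hM.mem_toFinset.mpr hi) le_rfl
  refine ⟨top_le_iff.mp htop ▸ ?_⟩
  exact Submodule.fg_biSup _ _ fun i _ => Module.Finite.iff_fg.mp (Module.Finite.range _)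

end DirectSumLemmas

section TotalSpace

variable (K : Type) [Field K] {P : Type} (F : ℤ → ℤ → P → Type)
  [∀ p q l, AddCommGroup (F p q l)] [∀ p q l, Module K (F p q l)]

theorem lof_lof_qcast {i j p : ℤ} (hij : i = j) (h : p - j = p - i) (e : EE P F p (p - j)) :
    lof K ℤ (Tot P F) i (lof K ℤ (fun p' => EE P F p' (p' - i)) p (qcast K P F p h e)) =
      lof K ℤ (Tot P F) j (lof K ℤ (fun p' => EE P F p' (p' - j)) p e) := by
  subst hij; rfl

variable (dv : ∀ (p q : ℤ) (l : P), F p q l →ₗ[K] F p (q + 1) l)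

theorem hdim_add_finrank_range [∀ p q l, FiniteDimensional K (F p q l)]
    (hdv2 : ∀ p q l, (dv p (q + 1) l).comp (dv p q l) = 0) (p q : ℤ) (l : P) :
    Hdim K P F dv p q l + Module.finrank K (LinearMap.range (dv p (q - 1) l)) =
      Module.finrank K (LinearMap.ker (dv p q l)) := by
  obtain ⟨q, rfl⟩ : ∃ q', q = q' + 1 := ⟨q - 1, (sub_add_cancel q 1).symm⟩
  refine Nat.sub_add_cancel ?_
  rw [add_sub_cancel_right]
  exact Submodule.finrank_mono (LinearMap.range_le_ker_iff.mpr (hdv2 p q l))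

variable [DecidableEq P] (dh : ∀ p q : ℤ, EE P F p q →ₗ[K] EE P F (p - 1) q)

/-- The sum `⊕ E^{p,q,λ}` of all graded pieces of the double complex, over all positions and
labels at once. -/
abbrev TotalSpace : Type := ⨁ x : ℤ × ℤ × P, F x.1 x.2.1 x.2.2

/-- The inclusion of the piece `E^{p,q,λ}` into the total space. -/
noncomputable def pieceIncl (p q : ℤ) (l : P) : F p q l →ₗ[K] TotalSpace F :=
  lof K (ℤ × ℤ × P) (fun x => F x.1 x.2.1 x.2.2) (p, q, l)

/-- The inclusion of the term `E^{p,q}` into the total space. -/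
noncomputable def termIncl (p q : ℤ) : EE P F p q →ₗ[K] TotalSpace F :=
  toModule K P _ fun l => pieceIncl K F p q l

@[simp]
theorem termIncl_lof (p q : ℤ) (l : P) (a : F p q l) :
    termIncl K F p q (lof K P (fun l' => F p q l') l a) = pieceIncl K F p q l a :=
  toModule_lof ..

@[simp]
theorem termIncl_qcast (p : ℤ) {q q' : ℤ} (h : q = q') (e : EE P F p q) :
    termIncl K F p q' (qcast K P F p h e) = termIncl K F p q e := by
  subst h; rfl

theorem totalSpace_hom_ext {W : Type*} [AddCommGroup W] [Module K W]
    {f g : TotalSpace F →ₗ[K] W}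
    (h : ∀ p q l, f ∘ₗ pieceIncl K F p q l = g ∘ₗ pieceIncl K F p q l) : f = g :=
  linearMap_ext K fun x => h x.1 x.2.1 x.2.2

/-- The total space is the direct sum of the terms `Tot^i` of the total complex. -/
noncomputable def totEquivTotalSpace : (⨁ i, Tot P F i) ≃ₗ[K] TotalSpace F :=
  LinearEquiv.ofLinearMap
    (toModule K ℤ _ fun i => toModule K ℤ _ fun p => termIncl K F p (p - i))
    (toModule K (ℤ × ℤ × P) _ fun x =>
      lof K ℤ (Tot P F) (x.1 - x.2.1) ∘ₗ
        lof K ℤ (fun p => EE P F p (p - (x.1 - x.2.1))) x.1 ∘ₗ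
          qcast K P F x.1 (sub_sub_cancel x.1 x.2.1).symm ∘ₗ
            lof K P (fun l => F x.1 x.2.1 l) x.2.2)
    (totalSpace_hom_ext K F fun p q l => LinearMap.ext fun a => by
      simp [pieceIncl])
    (linearMap_ext K fun i => linearMap_ext K fun p => linearMap_ext K fun l =>
      LinearMap.ext fun a => by simp [pieceIncl, lof_lof_qcast K F (sub_sub_cancel p i)])

theorem totEquivTotalSpace_lof_lof (i p : ℤ) (e : EE P F p (p - i)) :
    totEquivTotalSpace K F
        (lof K ℤ (Tot P F) i (lof K ℤ (fun p' => EE P F p' (p' - i)) p e)) =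
      termIncl K F p (p - i) e := by
  simp [totEquivTotalSpace]

/-- The vertical differential of the double complex, on the total space. -/
noncomputable def totalVertical : TotalSpace F →ₗ[K] TotalSpace F :=
  toModule K (ℤ × ℤ × P) _ fun x =>
    pieceIncl K F x.1 (x.2.1 + 1) x.2.2 ∘ₗ dv x.1 x.2.1 x.2.2

/-- The horizontal differential of the double complex, on the total space. -/
noncomputable def totalHorizontal : TotalSpace F →ₗ[K] TotalSpace F :=
  toModule K (ℤ × ℤ × P) _ fun x =>
    termIncl K F (x.1 - 1) x.2.1 ∘ₗ dh x.1 x.2.1 ∘ₗ lof K P (fun l => F x.1 x.2.1 l) x.2.2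

theorem totalVertical_comp_pieceIncl (p q : ℤ) (l : P) :
    totalVertical K F dv ∘ₗ pieceIncl K F p q l = pieceIncl K F p (q + 1) l ∘ₗ dv p q l :=
  LinearMap.ext fun a => by simp [totalVertical, pieceIncl]

theorem totalHorizontal_pieceIncl (p q : ℤ) (l : P) (a : F p q l) :
    totalHorizontal K F dh (pieceIncl K F p q l a) =
      termIncl K F (p - 1) q (dh p q (lof K P (fun l' => F p q l') l a)) :=
  toModule_lof ..

theorem totalVertical_termIncl (p q : ℤ) (e : EE P F p q) :
    totalVertical K F dv (termIncl K F p q e) = termIncl K F p (q + 1) (DV K P F dv p q e) := by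
  have : totalVertical K F dv ∘ₗ termIncl K F p q =
      termIncl K F p (q + 1) ∘ₗ DV K P F dv p q := by
    refine linearMap_ext K fun l => LinearMap.ext fun a => ?_
    simpa [DV] using LinearMap.congr_fun (totalVertical_comp_pieceIncl K F dv p q l) a
  exact LinearMap.congr_fun this e

theorem totalHorizontal_termIncl (p q : ℤ) (e : EE P F p q) :
    totalHorizontal K F dh (termIncl K F p q e) = termIncl K F (p - 1) q (dh p q e) := by
  have : totalHorizontal K F dh ∘ₗ termIncl K F p q = termIncl K F (p - 1) q ∘ₗ dh p q := by
    ext l a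
    simp [totalHorizontal_pieceIncl]
  exact LinearMap.congr_fun this e

theorem totalDifferential_totEquivTotalSpace (i : ℤ) (t : Tot P F (i + 1)) :
    (totalVertical K F dv + totalHorizontal K F dh)
        (totEquivTotalSpace K F (lof K ℤ (Tot P F) (i + 1) t)) =
      totEquivTotalSpace K F (lof K ℤ (Tot P F) i (totD K P F dv dh i t)) := by
  have : (totalVertical K F dv + totalHorizontal K F dh) ∘ₗ
        (totEquivTotalSpace K F).toLinearMap ∘ₗ lof K ℤ (Tot P F) (i + 1) =
      (totEquivTotalSpace K F).toLinearMap ∘ₗ lof K ℤ (Tot P F) i ∘ₗ totD K P F dv dh i := by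
    refine linearMap_ext K fun p => LinearMap.ext fun e => ?_
    simp [totD, totalVertical_termIncl, totalHorizontal_termIncl,
      totEquivTotalSpace_lof_lof, add_comm]
  exact LinearMap.congr_fun this t

theorem range_totalDifferential_eq_ker (hexact : ∀ i : ℤ,
      LinearMap.range (totD K P F dv dh (i + 1)) = LinearMap.ker (totD K P F dv dh i)) :
    LinearMap.range (totalVertical K F dv + totalHorizontal K F dh) =
      LinearMap.ker (totalVertical K F dv + totalHorizontal K F dh) :=
  range_eq_ker_of_directSum (Equiv.addRight 1) hexact (totEquivTotalSpace K F)
    (totalDifferential_totEquivTotalSpace K F dv dh)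

theorem totalVertical_comp_self (hdv2 : ∀ p q l, (dv p (q + 1) l).comp (dv p q l) = 0) :
    totalVertical K F dv ∘ₗ totalVertical K F dv = 0 :=
  totalSpace_hom_ext K F fun p q l => by
    rw [LinearMap.comp_assoc, totalVertical_comp_pieceIncl, ← LinearMap.comp_assoc,
      totalVertical_comp_pieceIncl, LinearMap.comp_assoc, hdv2, LinearMap.comp_zero,
      LinearMap.zero_comp]

/-- The subspace `E^{p,q,λ}` of the total space. -/
noncomputable def piece (x : ℤ × ℤ × P) : Submodule K (TotalSpace F) :=
  LinearMap.range (pieceIncl K F x.1 x.2.1 x.2.2)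

theorem isInternal_piece : IsInternal (piece K F) := isInternal_range_lof

theorem termIncl_mem {p q : ℤ} {e : EE P F p q} {W : Submodule K (TotalSpace F)}
    (h : ∀ l, e l ≠ 0 → pieceIncl K F p q l (e l) ∈ W) : termIncl K F p q e ∈ W := by
  classical
  rw [← sum_support_of e, map_sum]
  refine sum_mem fun l hl => ?_
  rw [← lof_eq_of K, termIncl_lof]
  exact h l (DFinsupp.mem_support_iff.mp hl)

/-- The shift `(p,q,λ) ↦ (p,q+1,λ)` by which the vertical differential moves the pieces. -/
def verticalShift : Equiv.Perm (ℤ × ℤ × P) :=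
  (Equiv.refl ℤ).prodCongr ((Equiv.addRight 1).prodCongr (Equiv.refl P))

/-- `y` lies below `x` if it is reached by moving `r > 0` steps down the diagonal and strictly
lowering the label. The edges of the `E₁` graph at `x` lead to the positions below
`verticalShift x`. -/
def DiagonalLT [LT P] (y x : ℤ × ℤ × P) : Prop :=
  y.2.2 < x.2.2 ∧ ∃ r : ℤ, 0 < r ∧ y.1 = x.1 - r ∧ y.2.1 = x.2.1 - r

instance [Preorder P] : IsStrictOrder (ℤ × ℤ × P) DiagonalLT where
  irrefl _ h := lt_irrefl _ h.1
  trans := by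
    rintro x y z ⟨hxy, r, hr, hp, hq⟩ ⟨hyz, t, ht, hp', hq'⟩
    exact ⟨hxy.trans hyz, r + t, by lia, by lia, by lia⟩

theorem map_totalVertical_piece (p q : ℤ) (l : P) :
    (piece K F (p, q, l)).map (totalVertical K F dv) =
      (LinearMap.range (dv p q l)).map (pieceIncl K F p (q + 1) l) := by
  rw [piece, ← LinearMap.range_comp, totalVertical_comp_pieceIncl, LinearMap.range_comp]

theorem map_totalVertical_piece_le (x : ℤ × ℤ × P) :
    (piece K F x).map (totalVertical K F dv) ≤ piece K F (verticalShift x) :=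
  (map_totalVertical_piece K F dv x.1 x.2.1 x.2.2).trans_le LinearMap.map_le_range

theorem pieceIncl_injective (p q : ℤ) (l : P) : Function.Injective (pieceIncl K F p q l) :=
  DirectSum.of_injective (p, q, l)

theorem ker_totalVertical_inf_piece (p q : ℤ) (l : P) :
    LinearMap.ker (totalVertical K F dv) ⊓ piece K F (p, q, l) =
      (LinearMap.ker (dv p q l)).map (pieceIncl K F p q l) := by
  have hker := LinearMap.ker_eq_bot.mpr (pieceIncl_injective K F p (q + 1) l)
  rw [inf_comm, piece, ← Submodule.map_comap_eq, ← LinearMap.ker_comp,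
    totalVertical_comp_pieceIncl, LinearMap.ker_comp_of_ker_eq_bot _ hker]

theorem map_totalHorizontal_piece_le [LT P] (hfilt : ∀ (p q : ℤ) (l : P) (a : F p q l) (l' : P),
      ¬ l' < l → (dh p q (DirectSum.of (fun l'' => F p q l'') l a)) l' = 0) (x : ℤ × ℤ × P) :
    (piece K F x).map (totalHorizontal K F dh) ≤
      strictBelow DiagonalLT (piece K F) (verticalShift x) := by
  obtain ⟨p, q, l⟩ := x
  rintro _ ⟨_, ⟨a, rfl⟩, rfl⟩
  rw [totalHorizontal_pieceIncl]
  refine termIncl_mem K F fun l' hl' => ?_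
  have hlt : l' < l := not_not.mp (mt (hfilt p q l a l') hl')
  exact le_strictBelow (piece K F) (y := (p - 1, q, l'))
    ⟨hlt, 1, one_pos, rfl, (add_sub_cancel_right q 1).symm⟩ ⟨_, rfl⟩

theorem hdim_add_finrank_map_totalVertical [∀ p q l, FiniteDimensional K (F p q l)]
    (hdv2 : ∀ p q l, (dv p (q + 1) l).comp (dv p q l) = 0) (x : ℤ × ℤ × P) :
    Hdim K P F dv x.1 x.2.1 x.2.2 +
        Module.finrank K ((piece K F (verticalShift.symm x)).map (totalVertical K F dv)) =
      Module.finrank K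
        (LinearMap.ker (totalVertical K F dv) ⊓ piece K F x : Submodule K (TotalSpace F)) := by
  obtain ⟨p, q, l⟩ := x
  have hsymm : verticalShift.symm (p, q, l) = (p, q - 1, l) := rfl
  have hfinrank (q' : ℤ) (W : Submodule K (F p q' l)) :
      Module.finrank K (W.map (pieceIncl K F p q' l)) = Module.finrank K W :=
    (Submodule.equivMapOfInjective _ (pieceIncl_injective K F p q' l) W).finrank_eq.symm
  rw [hsymm, map_totalVertical_piece, ker_totalVertical_inf_piece, hfinrank, hfinrank]
  exact hdim_add_finrank_range K F dv hdv2 p q l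

end TotalSpace

/-- Let `(E^{p,q}, d_v, d_h)` be a double complex of
finite-dimensional vector spaces with finitely many nonzero terms, with each term
decomposed as `⊕_{λ ∈ P} E^{p,q,λ}` over a poset `P`, the vertical differential
label-preserving and the horizontal differential strictly label-decreasing.  If the
total complex is exact, then the `E₁` graph — with `dim H(d_v)^{p,q,λ}` vertices
labeled `(p,q,λ)` and all edges `(p,q,λ) → (p−r, q−r+1, λ')` for `r > 0`, `λ' < λ` —
has a perfect matching. -/
theorem exact_double_complex_E1_graph_has_perfect_matching
    (K : Type) [Field K] (P : Type) [PartialOrder P] [DecidableEq P]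
    (F : ℤ → ℤ → P → Type)
    [∀ p q l, AddCommGroup (F p q l)] [∀ p q l, Module K (F p q l)]
    [∀ p q l, FiniteDimensional K (F p q l)]
    (hfin : (Function.support fun x : ℤ × ℤ × P =>
      Module.finrank K (F x.1 x.2.1 x.2.2)).Finite)
    (dv : ∀ (p q : ℤ) (l : P), F p q l →ₗ[K] F p (q + 1) l)
    (dh : ∀ p q : ℤ, EE P F p q →ₗ[K] EE P F (p - 1) q)
    (hdv2 : ∀ p q l, (dv p (q + 1) l).comp (dv p q l) = 0)
    (hdh2 : ∀ p q, (dh (p - 1) q).comp (dh p q) = 0)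
    (hanti : ∀ p q, (dh p (q + 1)).comp (DV K P F dv p q) +
      (DV K P F dv (p - 1) q).comp (dh p q) = 0)
    (hfilt : ∀ (p q : ℤ) (l : P) (x : F p q l) (l' : P), ¬ l' < l →
      (dh p q (DirectSum.of (fun l'' => F p q l'') l x)) l' = 0)
    (hexact : ∀ i : ℤ, LinearMap.range (totD K P F dv dh (i + 1)) =
      LinearMap.ker (totD K P F dv dh i)) :
    ∃ m : (Σ x : ℤ × ℤ × P, Fin (Hdim K P F dv x.1 x.2.1 x.2.2)) →
        (Σ x : ℤ × ℤ × P, Fin (Hdim K P F dv x.1 x.2.1 x.2.2)),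
      Function.Involutive m ∧ ∀ v, m v ≠ v ∧
        (((m v).1.2.2 < v.1.2.2 ∧ ∃ r : ℤ, 0 < r ∧
            (m v).1.1 = v.1.1 - r ∧ (m v).1.2.1 = v.1.2.1 - r + 1) ∨
          (v.1.2.2 < (m v).1.2.2 ∧ ∃ r : ℤ, 0 < r ∧
            v.1.1 = (m v).1.1 - r ∧ v.1.2.1 = (m v).1.2.1 - r + 1)) := by
  have := finiteDimensional_directSum hfin
  obtain ⟨m, hinv, hm⟩ := exists_isPerfectMatching_of_perturbation (isInternal_piece K F)
    (map_totalVertical_piece_le K F dv) (totalVertical_comp_self K F dv hdv2)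
    (map_totalHorizontal_piece_le K F dh hfilt)
    (range_totalDifferential_eq_ker K F dv dh hexact)
    (hdim_add_finrank_map_totalVertical K F dv hdv2)
  have hedge {x y : ℤ × ℤ × P} (h : DiagonalLT y (verticalShift x)) :
      y.2.2 < x.2.2 ∧ ∃ r : ℤ, 0 < r ∧ y.1 = x.1 - r ∧ y.2.1 = x.2.1 - r + 1 := by
    obtain ⟨hlt, r, hr, hp, hq⟩ := h
    exact ⟨hlt, r, hr, hp, hq.trans (add_sub_right_comm x.2.1 1 r)⟩
  exact ⟨m, hinv, fun v => ⟨(hm v).1, (hm v).2.imp hedge hedge⟩⟩
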